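/- Let H be a commutative Hopf algebra and A(B)^H a Hopf Galois extension. Equip (A⊗_B A)^B with the right H-coaction a⊗a' ↦ (a⊗a'(0)) ⊗ a'(1). Then the Galois map (A⊗_B A)^B ⊗ (A⊗_B A)^B → (A⊗_B A)^B ⊗ H sending u⊗v to u·v(0) ⊗ v(1) (product taken in (A⊗_B A)^B) is surjective. -/

import Mathlib

open TensorProduct LinearMap

noncomputable section

variable {k H A M : Type*} [Field k] [CommRing H] [HopfAlgebra k H]
  [Ring A] [Algebra k A] [AddCommGroup M] [Module k M]

local notation "Δ" => (Coalgebra.comul (R := k) (A := H))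
local notation "εH" => (Coalgebra.counit (R := k) (A := H))
local notation "𝒮" => (HopfAlgebra.antipode (R := k) (A := H))
local notation "mulH" => (LinearMap.mul' k H)
local notation "mulA" => (LinearMap.mul' k A)

/-- Right-hand side of the right-right (anti) Yetter-Drinfeld compatibility:
`m ⊗ h ↦ act (m₍₀₎ ⊗ h⑵) ⊗ s h⑴ * m₍₁₎ * h⑶`, where the comultiplication of `H` is `Dh`,
its multiplication is `mH` and `s` plays the role of the (inverse of the) antipode. -/
def ydRhs (mH : H ⊗[k] H →ₗ[k] H) (Dh : H →ₗ[k] H ⊗[k] H) (s : H →ₗ[k] H)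
    (act : M ⊗[k] H →ₗ[k] M) (ρM : M →ₗ[k] M ⊗[k] H) : M ⊗[k] H →ₗ[k] M ⊗[k] H :=
  lTensor M (mH ∘ₗ TensorProduct.map s mH) ∘ₗ
  (TensorProduct.assoc k M H (H ⊗[k] H)).toLinearMap ∘ₗ
  rTensor (H ⊗[k] H) (rTensor H act ∘ₗ (TensorProduct.assoc k M H H).symm.toLinearMap ∘ₗ
      lTensor M (TensorProduct.comm k H H).toLinearMap) ∘ₗ
  (tensorTensorTensorComm k M H (H ⊗[k] H) H).toLinearMap ∘ₗ
  TensorProduct.map ρM (rTensor H Dh ∘ₗ Dh)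

/-- Right-hand side of the left-right anti-Yetter-Drinfeld compatibility:
`h ⊗ m ↦ act (h⑵ ⊗ m₍₀₎) ⊗ h⑶ * m₍₁₎ * s h⑴`. -/
def aydLRRhs (mH : H ⊗[k] H →ₗ[k] H) (Dh : H →ₗ[k] H ⊗[k] H) (s : H →ₗ[k] H)
    (act : H ⊗[k] M →ₗ[k] M) (ρM : M →ₗ[k] M ⊗[k] H) : H ⊗[k] M →ₗ[k] M ⊗[k] H :=
  TensorProduct.map act
      (mH ∘ₗ lTensor H mH ∘ₗ lTensor H (lTensor H s) ∘ₗ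
        lTensor H (TensorProduct.comm k H H).toLinearMap ∘ₗ
        (TensorProduct.assoc k H H H).toLinearMap) ∘ₗ
  (tensorTensorTensorComm k H (H ⊗[k] H) M H).toLinearMap ∘ₗ
  TensorProduct.map
    ((TensorProduct.assoc k H H H).toLinearMap ∘ₗ
      (TensorProduct.comm k H (H ⊗[k] H)).toLinearMap ∘ₗ lTensor H Dh ∘ₗ Dh) ρM

/-- Right-hand side of the right-left anti-Yetter-Drinfeld compatibility:
`m ⊗ h ↦ s h⑶ * m₍₋₁₎ * h⑴ ⊗ act (m₍₀₎ ⊗ h⑵)`. -/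
def aydRLRhs (mH : H ⊗[k] H →ₗ[k] H) (Dh : H →ₗ[k] H ⊗[k] H) (s : H →ₗ[k] H)
    (act : M ⊗[k] H →ₗ[k] M) (lρ : M →ₗ[k] H ⊗[k] M) : M ⊗[k] H →ₗ[k] H ⊗[k] M :=
  rTensor M (mH ∘ₗ (TensorProduct.comm k H H).toLinearMap ∘ₗ lTensor H s) ∘ₗ
  (TensorProduct.assoc k H H M).symm.toLinearMap ∘ₗ
  lTensor H (TensorProduct.comm k M H).toLinearMap ∘ₗ
  TensorProduct.map mH (rTensor H act ∘ₗ (TensorProduct.assoc k M H H).symm.toLinearMap) ∘ₗ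
  (tensorTensorTensorComm k H M H (H ⊗[k] H)).toLinearMap ∘ₗ
  TensorProduct.map lρ (lTensor H Dh ∘ₗ Dh)

/-- `sandwich p q (a ⊗ (x ⊗ y)) = p x * a * q y`. -/
def sandwich (p q : H →ₗ[k] A) : A ⊗[k] (H ⊗[k] H) →ₗ[k] A :=
  mulA ∘ₗ TensorProduct.map (mulA ∘ₗ TensorProduct.map p LinearMap.id) q ∘ₗ
    rTensor H (TensorProduct.comm k A H).toLinearMap ∘ₗ
    (TensorProduct.assoc k A H H).symm.toLinearMap

/-- The right `H`-action `a · h = g h⑴ * a * f h⑵` attached to a total integral `f` with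
convolution inverse `g`. -/
def intAct (Dh : H →ₗ[k] H ⊗[k] H) (f g : H →ₗ[k] A) : A ⊗[k] H →ₗ[k] A :=
  sandwich g f ∘ₗ lTensor A Dh

/-- The left `H`-action `h · a = f h⑵ * a * g h⑴`. -/
def intActL (Dh : H →ₗ[k] H ⊗[k] H) (f g : H →ₗ[k] A) : H ⊗[k] A →ₗ[k] A :=
  sandwich f g ∘ₗ lTensor A ((TensorProduct.comm k H H).toLinearMap ∘ₗ Dh) ∘ₗ
    (TensorProduct.comm k H A).toLinearMap

/-- The set of coinvariants `B = {a | ρ a = a ⊗ 1}`. -/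
def coinv (ρA : A →ₗ[k] A ⊗[k] H) : Set A := {a : A | ρA a = a ⊗ₜ[k] (1 : H)}

/-- The canonical Galois map `A ⊗ A → A ⊗ H`, `a ⊗ a' ↦ a * a'₍₀₎ ⊗ a'₍₁₎`. -/
def canMap (ρA : A →ₗ[k] A ⊗[k] H) : A ⊗[k] A →ₗ[k] A ⊗[k] H :=
  rTensor H mulA ∘ₗ (TensorProduct.assoc k A A H).symm.toLinearMap ∘ₗ lTensor A ρA

/-- The kernel of `A ⊗ A → A ⊗_B A`: the span of the elements `(a*b) ⊗ a' - a ⊗ (b*a')`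
with `b` a coinvariant; so `A ⊗_B A = (A ⊗ A) ⧸ galRel ρA`. -/
def galRel (ρA : A →ₗ[k] A ⊗[k] H) : Submodule k (A ⊗[k] A) :=
  Submodule.span k {x : A ⊗[k] A |
    ∃ a a' b : A, b ∈ coinv ρA ∧ x = (a * b) ⊗ₜ[k] a' - a ⊗ₜ[k] (b * a')}

/-- The span of the commutators `[A, B]`, `B` the coinvariants; `A_B = A ⧸ commSub ρA`. -/
def commSub (ρA : A →ₗ[k] A ⊗[k] H) : Submodule k A :=
  Submodule.span k {x : A | ∃ a b : A, b ∈ coinv ρA ∧ x = a * b - b * a}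

/-- `δ(h⑴) • s h⑵`, the twisted antipode. -/
def twistS (δl : H →ₗ[k] k) (s : H →ₗ[k] H) (Dh : H →ₗ[k] H ⊗[k] H) : H →ₗ[k] H :=
  (TensorProduct.lid k H).toLinearMap ∘ₗ TensorProduct.map δl s ∘ₗ Dh

/-- The `B`-centralizer `(A ⊗_B A)^B` inside `(A ⊗ A) ⧸ galRel ρA`. -/
def centMU (ρA : A →ₗ[k] A ⊗[k] H) : Set ((A ⊗[k] A) ⧸ galRel ρA) :=
  {z | ∀ b ∈ coinv ρA, ∀ w : A ⊗[k] A, (galRel ρA).mkQ w = z →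
    (galRel ρA).mkQ (rTensor A (LinearMap.mulLeft k b) w) =
      (galRel ρA).mkQ (lTensor A (LinearMap.mulRight k b) w)}

theorem aux_can_tmul (ρA : A →ₗ[k] A ⊗[k] H) (a a' : A) :
    canMap ρA (a ⊗ₜ[k] a') = (a ⊗ₜ[k] (1 : H)) * ρA a' := by
  simp only [canMap, LinearMap.comp_apply, lTensor_tmul]
  induction ρA a' using TensorProduct.induction_on with
  | zero => simp
  | tmul x y => simp
  | add x y hx hy => simp only [tmul_add, map_add, mul_add, hx, hy]

theorem aux_comm_one (X : A ⊗[k] H) (h : H) :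
    ((1 : A) ⊗ₜ[k] h) * X = X * ((1 : A) ⊗ₜ[k] h) := by
  induction X using TensorProduct.induction_on with
  | zero => simp
  | tmul x y => simp [mul_comm]
  | add x y hx hy => simp only [mul_add, add_mul, hx, hy]

/-- The map sending a pure tensor of a and c to X ↦ (a ⊗ 1) * X * ρ c. -/
def auxF (ρA : A →ₗ[k] A ⊗[k] H) : A ⊗[k] A →ₗ[k] (A ⊗[k] H) →ₗ[k] (A ⊗[k] H) :=
  TensorProduct.lift (LinearMap.mk₂ k
    (fun a a' => LinearMap.mulLeft k (a ⊗ₜ[k] (1 : H)) ∘ₗ LinearMap.mulRight k (ρA a'))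
    (fun a b c => by ext; simp [add_tmul, add_mul])
    (fun a b c => by ext; simp [← smul_tmul'])
    (fun a b c => by ext; simp [mul_add])
    (fun a b c => by ext; simp))

theorem auxF_tmul (ρA : A →ₗ[k] A ⊗[k] H) (a a' : A) (X : A ⊗[k] H) :
    auxF ρA (a ⊗ₜ[k] a') X = (a ⊗ₜ[k] (1 : H)) * (X * ρA a') := by
  simp [auxF]

theorem auxF_one (ρA : A →ₗ[k] A ⊗[k] H) (u : A ⊗[k] A) (h : H) :
    auxF ρA u ((1 : A) ⊗ₜ[k] h) = canMap ρA u * ((1 : A) ⊗ₜ[k] h) := by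
  induction u using TensorProduct.induction_on with
  | zero => simp
  | tmul x y => rw [auxF_tmul, aux_can_tmul, aux_comm_one, mul_assoc]
  | add x y hx hy => simp only [map_add, add_mul, LinearMap.add_apply, hx, hy]

/-- The product (a ⊗ c) ⊗ (b ⊗ d) ↦ a b ⊗ d c. -/
def auxP : (A ⊗[k] A) ⊗[k] (A ⊗[k] A) →ₗ[k] A ⊗[k] A :=
  TensorProduct.map mulA (mulA ∘ₗ (TensorProduct.comm k A A).toLinearMap) ∘ₗ
    (tensorTensorTensorComm k A A A A).toLinearMap

theorem aux_can_P (ρA : A →ₗ[k] A ⊗[k] H) (hρ_mul : ∀ x y : A, ρA (x * y) = ρA x * ρA y)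
    (u v : A ⊗[k] A) :
    canMap ρA (auxP (u ⊗ₜ[k] v)) = auxF ρA u (canMap ρA v) := by
  induction u using TensorProduct.induction_on with
  | zero => simp
  | add x y hx hy => simp only [map_add, add_tmul, LinearMap.add_apply, hx, hy]
  | tmul a a' =>
    induction v using TensorProduct.induction_on with
    | zero => simp
    | add x y hx hy => simp only [map_add, tmul_add, hx, hy]
    | tmul c c' =>
      rw [auxF_tmul, aux_can_tmul]
      simp only [auxP, LinearMap.comp_apply, LinearEquiv.coe_coe, tensorTensorTensorComm_tmul,
        TensorProduct.map_tmul, TensorProduct.comm_tmul, LinearMap.mul'_apply]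
      rw [aux_can_tmul, hρ_mul, ← mul_assoc, ← mul_assoc, ← mul_assoc,
        Algebra.TensorProduct.tmul_mul_tmul, one_mul]

theorem aux_can_coact (ρA : A →ₗ[k] A ⊗[k] H)
    (hρ_coassoc : (TensorProduct.assoc k A H H).toLinearMap ∘ₗ rTensor H ρA ∘ₗ ρA =
      lTensor A Δ ∘ₗ ρA) (v : A ⊗[k] A) :
    rTensor H (canMap ρA) ((TensorProduct.assoc k A A H).symm (lTensor A ρA v)) =
      (TensorProduct.assoc k A H H).symm (lTensor A Δ (canMap ρA v)) := by
  induction v using TensorProduct.induction_on with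
  | zero => simp
  | add x y hx hy => simp only [map_add, hx, hy]
  | tmul a a' =>
    have h1 : ∀ X : A ⊗[k] H, rTensor H (canMap ρA)
        ((TensorProduct.assoc k A A H).symm (a ⊗ₜ[k] X)) =
        rTensor H (LinearMap.mulLeft k (a ⊗ₜ[k] (1 : H))) (rTensor H ρA X) := by
      intro X
      induction X using TensorProduct.induction_on with
      | zero => simp
      | add x y hx hy => simp only [map_add, tmul_add, hx, hy]
      | tmul x y => simp [aux_can_tmul]
    have h2 : ∀ Y : A ⊗[k] (H ⊗[k] H), rTensor H (LinearMap.mulLeft k (a ⊗ₜ[k] (1 : H)))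
        ((TensorProduct.assoc k A H H).symm Y) =
        (TensorProduct.assoc k A H H).symm (rTensor (H ⊗[k] H) (LinearMap.mulLeft k a) Y) := by
      intro Y
      induction Y using TensorProduct.induction_on with
      | zero => simp
      | add x y hx hy => simp only [map_add, hx, hy]
      | tmul x y =>
        induction y using TensorProduct.induction_on with
        | zero => simp
        | add x y hx hy => simp only [map_add, tmul_add, hx, hy]
        | tmul y z => simp
    have h3 : ∀ X : A ⊗[k] H, rTensor (H ⊗[k] H) (LinearMap.mulLeft k a) (lTensor A Δ X) =
        lTensor A Δ ((a ⊗ₜ[k] (1 : H)) * X) := by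
      intro X
      induction X using TensorProduct.induction_on with
      | zero => simp
      | add x y hx hy => simp only [map_add, mul_add, hx, hy]
      | tmul x y => simp
    have h4 : rTensor H ρA (ρA a') =
        (TensorProduct.assoc k A H H).symm (lTensor A Δ (ρA a')) := by
      rw [LinearEquiv.eq_symm_apply]
      exact LinearMap.congr_fun hρ_coassoc a'
    rw [lTensor_tmul, h1, h4, h2, h3, aux_can_tmul]

theorem aux_rT_P (ρA : A →ₗ[k] A ⊗[k] H) (hρ_mul : ∀ x y : A, ρA (x * y) = ρA x * ρA y)
    (u : A ⊗[k] A) (X : (A ⊗[k] A) ⊗[k] H) :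
    rTensor H (canMap ρA) (rTensor H auxP
      ((TensorProduct.assoc k (A ⊗[k] A) (A ⊗[k] A) H).symm (u ⊗ₜ[k] X))) =
      rTensor H (auxF ρA u) (rTensor H (canMap ρA) X) := by
  induction X using TensorProduct.induction_on with
  | zero => simp
  | add x y hx hy => simp only [map_add, tmul_add, hx, hy]
  | tmul x y => simp [aux_can_P ρA hρ_mul]

/-- `x ⊗ (y ⊗ z) ↦ c * (1 ⊗ S x * y) ⊗ z`, in stages. -/
def auxPsi (c : A ⊗[k] H) : H ⊗[k] (H ⊗[k] H) →ₗ[k] (A ⊗[k] H) ⊗[k] H :=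
  rTensor H (LinearMap.mulLeft k c ∘ₗ TensorProduct.mk k A H 1 ∘ₗ mulH ∘ₗ rTensor H 𝒮) ∘ₗ
    (TensorProduct.assoc k H H H).symm.toLinearMap

theorem auxPsi_comul (c : A ⊗[k] H) (h : H) :
    auxPsi c (lTensor H Δ (Δ h)) = c ⊗ₜ[k] h := by
  rw [← Coalgebra.coassoc_apply]
  simp only [auxPsi, LinearMap.comp_apply, LinearEquiv.coe_coe, LinearEquiv.symm_apply_apply]
  rw [← LinearMap.comp_apply (rTensor H _) (rTensor H _), ← rTensor_comp]
  have e : (LinearMap.mulLeft k c ∘ₗ TensorProduct.mk k A H 1 ∘ₗ mulH ∘ₗ rTensor H 𝒮) ∘ₗ Δ =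
      LinearMap.toSpanSingleton k (A ⊗[k] H) c ∘ₗ εH := by
    ext x
    simp [Algebra.algebraMap_eq_smul_one, tmul_smul, ← Algebra.TensorProduct.one_def]
  rw [e, rTensor_comp, LinearMap.comp_apply, Coalgebra.rTensor_counit_comul]
  simp

theorem aux_final (c : A ⊗[k] H) (x y : H) :
    rTensor H (LinearMap.mulLeft k (c * ((1 : A) ⊗ₜ[k] 𝒮 x)))
      ((TensorProduct.assoc k A H H).symm ((1 : A) ⊗ₜ[k] Δ y)) =
      auxPsi c (x ⊗ₜ[k] Δ y) := by
  induction Δ y using TensorProduct.induction_on with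
  | zero => simp
  | add x y hx hy => simp only [map_add, tmul_add, hx, hy]
  | tmul p q => simp [auxPsi, mul_assoc]

theorem aux_cent (ρA : A →ₗ[k] A ⊗[k] H) (hρ_mul : ∀ x y : A, ρA (x * y) = ρA x * ρA y)
    (hGal_ker : LinearMap.ker (canMap ρA) = galRel ρA) (w : A ⊗[k] A) :
    (galRel ρA).mkQ w ∈ centMU ρA ↔ ∀ b ∈ coinv ρA,
      (b ⊗ₜ[k] (1 : H)) * canMap ρA w = canMap ρA w * (b ⊗ₜ[k] (1 : H)) := by
  have hq : ∀ x y, (galRel ρA).mkQ x = (galRel ρA).mkQ y ↔ canMap ρA x = canMap ρA y := by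
    intro x y
    rw [← sub_eq_zero, ← map_sub, ← sub_eq_zero (a := canMap ρA x), ← map_sub,
      Submodule.mkQ_apply, Submodule.Quotient.mk_eq_zero, ← hGal_ker, LinearMap.mem_ker]
  have hl : ∀ b w, canMap ρA (rTensor A (LinearMap.mulLeft k b) w) =
      (b ⊗ₜ[k] (1 : H)) * canMap ρA w := by
    intro b w
    induction w using TensorProduct.induction_on with
    | zero => simp
    | add x y hx hy => simp only [map_add, mul_add, hx, hy]
    | tmul p q => simp [aux_can_tmul, ← mul_assoc]
  have hr : ∀ b ∈ coinv ρA, ∀ w, canMap ρA (lTensor A (LinearMap.mulRight k b) w) =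
      canMap ρA w * (b ⊗ₜ[k] (1 : H)) := by
    intro b hb w
    have hb' : ρA b = b ⊗ₜ[k] (1 : H) := hb
    induction w using TensorProduct.induction_on with
    | zero => simp
    | add x y hx hy => simp only [map_add, add_mul, hx, hy]
    | tmul p q => simp [aux_can_tmul, mul_assoc, hρ_mul, hb']
  constructor
  · intro h b hb
    have := h b hb w rfl
    rwa [hq, hl, hr b hb] at this
  · intro h b hb w' hw'
    rw [hq] at hw'
    rw [hq, hl, hr b hb, hw', h b hb]

/-- For a commutative Hopf algebra `H` and a Hopf Galois extension `A(B)^H`,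
the Galois-type map `(A ⊗_B A)^B ⊗ (A ⊗_B A)^B → (A ⊗_B A)^B ⊗ H`, `u ⊗ v ↦ u · v₍₀₎ ⊗ v₍₁₎`,
is surjective. -/
theorem commutative_galois_MU_map_surjective
    (ρA : A →ₗ[k] A ⊗[k] H)
    (hρ_coassoc : (TensorProduct.assoc k A H H).toLinearMap ∘ₗ rTensor H ρA ∘ₗ ρA =
      lTensor A Δ ∘ₗ ρA)
    (hρ_counit : (TensorProduct.rid k A).toLinearMap ∘ₗ lTensor A εH ∘ₗ ρA = LinearMap.id)
    (hρ_one : ρA 1 = (1 : A) ⊗ₜ[k] (1 : H))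
    (hρ_mul : ∀ x y : A, ρA (x * y) = ρA x * ρA y)
    (hGal_surj : Function.Surjective (canMap ρA))
    (hGal_ker : LinearMap.ker (canMap ρA) = galRel ρA)
 :
    ∀ z ∈ centMU ρA, ∀ h : H,
      z ⊗ₜ[k] h ∈ Submodule.span k
        {y : ((A ⊗[k] A) ⧸ galRel ρA) ⊗[k] H |
          ∃ u v : A ⊗[k] A, (galRel ρA).mkQ u ∈ centMU ρA ∧ (galRel ρA).mkQ v ∈ centMU ρA ∧
            y = (rTensor H (galRel ρA).mkQ ∘ₗ rTensor H (TensorProduct.map mulA (mulA ∘ₗ (TensorProduct.comm k A A).toLinearMap) ∘ₗ (tensorTensorTensorComm k A A A A).toLinearMap) ∘ₗ (TensorProduct.assoc k (A ⊗[k] A) (A ⊗[k] A) H).symm.toLinearMap ∘ₗ lTensor (A ⊗[k] A) ((TensorProduct.assoc k A A H).symm.toLinearMap ∘ₗ lTensor A ρA)) (u ⊗ₜ[k] v)} := by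
  intro z hz h
  obtain ⟨w, rfl⟩ := (galRel ρA).mkQ_surjective z
  have hw := (aux_cent ρA hρ_mul hGal_ker w).1 hz
  choose T hT using fun g : H => hGal_surj ((1 : A) ⊗ₜ[k] g)
  set R : ((A ⊗[k] A) ⧸ galRel ρA) →ₗ[k] A ⊗[k] H :=
    (galRel ρA).liftQ (canMap ρA) hGal_ker.ge with hR
  have hRinj : Function.Injective R := by
    rw [← LinearMap.ker_eq_bot]
    exact Submodule.ker_liftQ_eq_bot _ _ _ hGal_ker.le
  have hRq : R ∘ₗ (galRel ρA).mkQ = canMap ρA := Submodule.liftQ_mkQ _ _ _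
  have hinj : Function.Injective (rTensor H R) :=
    Module.Flat.rTensor_preserves_injective_linearMap R hRinj
  have hu : ∀ g, canMap ρA (auxP (w ⊗ₜ[k] T g)) = canMap ρA w * ((1 : A) ⊗ₜ[k] g) := by
    intro g
    rw [aux_can_P ρA hρ_mul, hT, auxF_one]
  have key : ∀ x y : H, rTensor H R ((rTensor H (galRel ρA).mkQ ∘ₗ rTensor H (auxP (k := k) (A := A)) ∘ₗ
      (TensorProduct.assoc k (A ⊗[k] A) (A ⊗[k] A) H).symm.toLinearMap ∘ₗ
      lTensor (A ⊗[k] A) ((TensorProduct.assoc k A A H).symm.toLinearMap ∘ₗ lTensor A ρA))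
      (auxP (w ⊗ₜ[k] T (𝒮 x)) ⊗ₜ[k] T y)) = auxPsi (canMap ρA w) (x ⊗ₜ[k] Δ y) := by
    intro x y
    simp only [LinearMap.comp_apply, LinearEquiv.coe_coe, lTensor_tmul]
    rw [← LinearMap.comp_apply (rTensor H R), ← rTensor_comp, hRq, aux_rT_P ρA hρ_mul,
      aux_can_coact ρA hρ_coassoc, hT, lTensor_tmul, ← aux_final, ← hu]
    induction Δ y using TensorProduct.induction_on with
    | zero => simp
    | add x y hx hy => simp only [map_add, tmul_add, hx, hy]
    | tmul p q => simp [auxF_one]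
  let r := Coalgebra.Repr.arbitrary k h
  have hsum : (galRel ρA).mkQ w ⊗ₜ[k] h = ∑ i ∈ r.index,
      (rTensor H (galRel ρA).mkQ ∘ₗ rTensor H (auxP (k := k) (A := A)) ∘ₗ
      (TensorProduct.assoc k (A ⊗[k] A) (A ⊗[k] A) H).symm.toLinearMap ∘ₗ
      lTensor (A ⊗[k] A) ((TensorProduct.assoc k A A H).symm.toLinearMap ∘ₗ lTensor A ρA))
      (auxP (w ⊗ₜ[k] T (𝒮 (r.left i))) ⊗ₜ[k] T (r.right i)) := by
    apply hinj
    rw [map_sum, Finset.sum_congr rfl (fun i _ => key (r.left i) (r.right i)), rTensor_tmul,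
      ← LinearMap.comp_apply R, hRq, ← auxPsi_comul, ← r.eq, map_sum, map_sum]
    simp only [lTensor_tmul]
  rw [hsum]
  refine Submodule.sum_mem _ fun i _ => Submodule.subset_span ⟨_, _, ?_, ?_, rfl⟩
  · rw [aux_cent ρA hρ_mul hGal_ker]
    intro b hb
    rw [hu, ← mul_assoc, hw b hb, mul_assoc, mul_assoc, aux_comm_one]
  · rw [aux_cent ρA hρ_mul hGal_ker]
    intro b hb
    rw [hT, aux_comm_one]
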